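/- arXiv:1606.04850 — 2 statements merged into one kernel-verified Lean document; each statement's English description precedes it below -/
import Mathlib

section
/- The series ∑_{n=0}^∞ ζ(2n)/((2n+1)·16^n) equals -(1/4)·log 2 - G/π, where G is Catalan's constant. -/
/-!
Expanding each term of `∑ k ≥ 1, z² / (k² - z²) = (1 - π z cot (π z)) / 2` as a geometric series and
summing over `k` first gives `∑ n ≥ 0, ζ(2n) z²ⁿ = -(π z cot (π z)) / 2`. Integrating over
`[0, 1/4]` reduces the claim to the value of `∫ x cot x` over `[0, π/4]`. This is half the sum of
* `∫ x (cot x + tan x)`, which the substitution `t = tan x` turns into `∫ arctan t / t` over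
  `[0, 1]`, i.e. Catalan's constant;
* `∫ x (cot x - tan x) = ∫ 2 x cot (2 x)`, which is half of `∫ x cot x` over `[0, π/2]`, and by
  parts this last integral is `-∫ log (sin x) = (π / 2) log 2`.
-/

open Real

noncomputable def catalanConst : ℝ := ∑' n : ℕ, (-1) ^ n / (2 * (n : ℝ) + 1) ^ 2

open MeasureTheory Set

theorem hasSum_integral_of_summable_pow_div_smul {ι E : Type*} [Countable ι]
    [NormedAddCommGroup E] [NormedSpace ℝ E] [CompleteSpace E] {a : ι → E} {k : ι → ℕ} {f : ℝ → E}
    {r : ℝ} (hr : 0 ≤ r) (ha : Summable fun i ↦ r ^ (k i + 1) / (k i + 1) * ‖a i‖)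
    (hf : ∀ x ∈ Ioo 0 r, HasSum (fun i ↦ x ^ k i • a i) (f x)) :
    HasSum (fun i ↦ (r ^ (k i + 1) / (k i + 1)) • a i) (∫ x in 0..r, f x) := by
  have integral_pow_zero (m : ℕ) : ∫ x in 0..r, x ^ m = r ^ (m + 1) / (m + 1) := by
    simp [integral_pow]
  have integral_norm (i : ι) :
      ∫ x in Ioc 0 r, ‖x ^ k i • a i‖ = r ^ (k i + 1) / (k i + 1) * ‖a i‖ := by
    rw [← integral_pow_zero, ← intervalIntegral.integral_mul_const,
      intervalIntegral.integral_of_le hr]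
    refine setIntegral_congr_fun measurableSet_Ioc fun x hx ↦ ?_
    simp only [norm_smul, norm_pow, norm_of_nonneg hx.1.le]
  have integrable (i : ι) : IntegrableOn (fun x : ℝ ↦ x ^ k i • a i) (Ioc 0 r) :=
    (intervalIntegrable_iff_integrableOn_Ioc_of_le hr).1 <|
      Continuous.intervalIntegrable (by fun_prop) 0 r
  have hsum := hasSum_integral_of_summable_integral_norm integrable
    (ha.congr fun i ↦ (integral_norm i).symm)
  simp only [← intervalIntegral.integral_of_le hr, intervalIntegral.integral_smul_const,
    integral_pow_zero] at hsum
  rwa [intervalIntegral.integral_congr_Ioo_of_le hr fun x hx ↦ (hf x hx).tsum_eq] at hsum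

theorem hasSum_of_hasSum_rows_of_hasSum_columns {α β γ : Type*} [AddCommGroup α] [UniformSpace α]
    [IsUniformAddGroup α] [CompleteSpace α] [T2Space α] {f : β → γ → α} {g : β → α} {h : γ → α}
    {s : α} (hf : Summable fun p : β × γ ↦ f p.1 p.2) (rows : ∀ b, HasSum (f b) (g b))
    (columns : ∀ c, HasSum (fun b ↦ f b c) (h c)) (hs : HasSum h s) : HasSum g s := by
  have total_eq : ∑' p : β × γ, f p.1 p.2 = s :=
    (((Equiv.prodComm γ β).hasSum_iff.2 hf.hasSum).prod_fiberwise columns).unique hs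
  exact total_eq ▸ hf.hasSum.prod_fiberwise rows

theorem hasSum_div_pow_two_mul_succ {𝕜 : Type*} [NormedField 𝕜] {z w : 𝕜} (h : ‖z‖ < ‖w‖) :
    HasSum (fun n : ℕ ↦ (z / w) ^ (2 * (n + 1))) (z ^ 2 / (w ^ 2 - z ^ 2)) := by
  have hw : w ≠ 0 := norm_pos_iff.1 ((norm_nonneg z).trans_lt h)
  have hnorm : ‖(z / w) ^ 2‖ < 1 := by
    rw [norm_pow, norm_div]
    exact pow_lt_one₀ (by positivity) ((div_lt_one (norm_pos_iff.2 hw)).2 h) two_ne_zero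
  have hvalue : (1 - (z / w) ^ 2)⁻¹ * (z / w) ^ 2 = z ^ 2 / (w ^ 2 - z ^ 2) := by
    field_simp
  have hsum := (hasSum_geometric_of_norm_lt_one hnorm).mul_right ((z / w) ^ 2)
  rw [hvalue] at hsum
  exact hsum.congr_fun fun n ↦ by rw [pow_mul, pow_succ]

theorem norm_natCast_add_one (n : ℕ) : ‖(n : ℂ) + 1‖ = n + 1 := by
  exact_mod_cast Complex.norm_natCast (n + 1)

theorem summable_div_succ_pow {z : ℂ} (hz : ‖z‖ < 1) :
    Summable fun p : ℕ × ℕ ↦ (z / (p.2 + 1)) ^ (2 * (p.1 + 1)) := by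
  have geometric : Summable fun n : ℕ ↦ (‖z‖ ^ 2) ^ (n + 1) :=
    (summable_nat_add_iff 1).2 <|
      summable_geometric_of_lt_one (by positivity) (pow_lt_one₀ (norm_nonneg z) hz two_ne_zero)
  have inv_sq : Summable fun k : ℕ ↦ 1 / ((k : ℝ) + 1) ^ 2 := by
    simpa using (summable_nat_add_iff 1).2 (Real.summable_one_div_nat_pow.2 one_lt_two)
  refine (geometric.mul_of_nonneg inv_sq (fun n ↦ by positivity)
    fun k ↦ by positivity).of_norm_bounded fun ⟨n, k⟩ ↦ ?_
  have hk : 1 ≤ ((k : ℝ) + 1) ^ 2 := one_le_pow₀ (by linarith [k.cast_nonneg (α := ℝ)])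
  rw [norm_pow, norm_div, norm_natCast_add_one, pow_mul, div_pow, div_pow, div_eq_mul_one_div]
  gcongr
  exact le_self_pow₀ hk n.succ_ne_zero

theorem hasSum_riemannZeta_nat {k : ℕ} (hk : 1 < k) :
    HasSum (fun n : ℕ ↦ 1 / ((n : ℂ) + 1) ^ k) (riemannZeta k) := by
  have hs : 1 < (k : ℂ).re := by simpa
  have hsum := (summable_nat_add_iff 1).2 (Complex.summable_one_div_nat_cpow.2 hs)
  rw [zeta_eq_tsum_one_div_nat_add_one_cpow hs]
  simpa using hsum.hasSum

theorem mem_integerComplement_of_norm_lt_one {z : ℂ} (hz₀ : z ≠ 0) (hz : ‖z‖ < 1) :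
    z ∈ Complex.integerComplement := by
  rintro ⟨m, rfl⟩
  rw [Complex.norm_intCast] at hz
  have : |m| < 1 := by exact_mod_cast hz
  exact hz₀ (by simp [Int.abs_lt_one_iff.1 this])

theorem hasSum_sq_div_sq_sub_sq {z : ℂ} (hz : z ∈ Complex.integerComplement) :
    HasSum (fun k : ℕ ↦ z ^ 2 / ((k + 1) ^ 2 - z ^ 2)) ((1 - π * z * Complex.cot (π * z)) / 2) := by
  have hz₀ := Complex.integerComplement.ne_zero hz
  have hsum : ∑' k : ℕ, cotTerm z k = π * Complex.cot (π * z) - 1 / z := (cot_series_rep' hz).symm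
  have h := (summable_cotTerm hz).hasSum.mul_left (-z / 2)
  rw [hsum] at h
  have hvalue : -z / 2 * (π * Complex.cot (π * z) - 1 / z) =
      (1 - π * z * Complex.cot (π * z)) / 2 := by
    field_simp
    ring
  refine (hvalue ▸ h).congr_fun fun k ↦ ?_
  rw [cotTerm_identity hz, ← neg_sub (z ^ 2), sq_sub_sq, div_neg]
  ring

theorem hasSum_riemannZeta_even_succ_mul_pow {z : ℂ} (hz₀ : z ≠ 0) (hz : ‖z‖ < 1) :
    HasSum (fun n : ℕ ↦ riemannZeta (2 * (n + 1 : ℕ)) * z ^ (2 * (n + 1)))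
      ((1 - π * z * Complex.cot (π * z)) / 2) := by
  have rows (n : ℕ) : HasSum (fun k : ℕ ↦ (z / (k + 1)) ^ (2 * (n + 1)))
      (riemannZeta (2 * (n + 1 : ℕ)) * z ^ (2 * (n + 1))) := by
    have h := (hasSum_riemannZeta_nat (k := 2 * (n + 1)) (by lia)).mul_right (z ^ (2 * (n + 1)))
    rw [Nat.cast_mul, Nat.cast_ofNat] at h
    exact h.congr_fun fun k ↦ by rw [div_pow, one_div_mul_eq_div]
  have columns (k : ℕ) : HasSum (fun n : ℕ ↦ (z / (k + 1)) ^ (2 * (n + 1)))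
      (z ^ 2 / ((k + 1) ^ 2 - z ^ 2)) := by
    refine hasSum_div_pow_two_mul_succ ?_
    rw [norm_natCast_add_one]
    exact hz.trans_le (by linarith [k.cast_nonneg (α := ℝ)])
  exact hasSum_of_hasSum_rows_of_hasSum_columns (f := fun n k : ℕ ↦ (z / (k + 1)) ^ (2 * (n + 1)))
    (summable_div_succ_pow hz) rows columns
    (hasSum_sq_div_sq_sub_sq (mem_integerComplement_of_norm_lt_one hz₀ hz))

theorem hasSum_riemannZeta_even_mul_pow {z : ℂ} (hz₀ : z ≠ 0) (hz : ‖z‖ < 1) :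
    HasSum (fun n : ℕ ↦ riemannZeta (2 * n) * z ^ (2 * n))
      (-(π * z * Complex.cot (π * z)) / 2) := by
  rw [← hasSum_nat_add_iff' 1]
  convert! hasSum_riemannZeta_even_succ_mul_pow hz₀ hz using 1
  simp [riemannZeta_zero]
  ring

theorem hasSum_riemannZeta_even_mul_pow_div {r : ℝ} (hr₀ : 0 < r) (hr : r < 1) :
    HasSum (fun n : ℕ ↦ riemannZeta (2 * n) * r ^ (2 * n + 1) / (2 * n + 1))
      ((-(∫ x in 0..π * r, x * cot x) / (2 * π) : ℝ) : ℂ) := by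
  have hasSum_pow : ∀ x ∈ Ioc 0 r, HasSum (fun n : ℕ ↦ x ^ (2 * n) • riemannZeta (2 * n))
      ((-(π * x * cot (π * x)) / 2 : ℝ) : ℂ) := by
    intro x hx
    have hnorm : ‖(x : ℂ)‖ < 1 := by
      rw [Complex.norm_of_nonneg hx.1.le]
      exact hx.2.trans_lt hr
    have h := hasSum_riemannZeta_even_mul_pow (Complex.ofReal_ne_zero.2 hx.1.ne') hnorm
    push_cast
    exact h.congr_fun fun n ↦ by rw [Complex.real_smul, Complex.ofReal_pow, mul_comm]
  have summable_norm : Summable fun n : ℕ ↦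
      r ^ (2 * n + 1) / ((2 * n : ℕ) + 1) * ‖riemannZeta (2 * n)‖ := by
    refine (hasSum_pow r ⟨hr₀, le_rfl⟩).summable.norm.of_nonneg_of_le (fun n ↦ by positivity)
      fun n ↦ ?_
    rw [norm_smul, norm_of_nonneg (by positivity)]
    gcongr
    refine (div_le_self (by positivity) (by simp)).trans ?_
    exact pow_le_pow_of_le_one hr₀.le hr.le (by lia)
  have integral_eq : ∫ x in 0..r, -(π * x * cot (π * x)) / 2 =
      -(∫ x in 0..π * r, x * cot x) / (2 * π) := by
    rw [intervalIntegral.integral_div, intervalIntegral.integral_neg,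
      intervalIntegral.integral_comp_mul_left (fun x ↦ x * cot x) pi_ne_zero, mul_zero, smul_eq_mul]
    field_simp
  have h := hasSum_integral_of_summable_pow_div_smul hr₀.le summable_norm
    fun x hx ↦ hasSum_pow x (Ioo_subset_Ioc_self hx)
  rw [intervalIntegral.integral_ofReal, integral_eq] at h
  refine h.congr_fun fun n ↦ ?_
  rw [Complex.real_smul]
  push_cast
  ring

theorem hasSum_integral_arctan_div {r : ℝ} (hr₀ : 0 ≤ r) (hr₁ : r ≤ 1) :
    HasSum (fun n : ℕ ↦ (-1) ^ n * r ^ (2 * n + 1) / (2 * n + 1) ^ 2)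
      (∫ t in 0..r, arctan t / t) := by
  have summable_inv_sq : Summable fun n : ℕ ↦ 1 / (2 * (n : ℝ) + 1) ^ 2 := by
    have h := (Real.summable_one_div_nat_pow.2 one_lt_two).comp_injective
      (i := fun n : ℕ ↦ 2 * n + 1) fun m n h ↦ by grind
    simpa [Function.comp_def] using h
  have summable_norm : Summable fun n : ℕ ↦
      r ^ (2 * n + 1) / ((2 * n : ℕ) + 1) * ‖(-1) ^ n / (2 * (n : ℝ) + 1)‖ := by
    refine summable_inv_sq.of_nonneg_of_le (fun n ↦ by positivity) fun n ↦ ?_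
    have hpow : r ^ (2 * n + 1) ≤ 1 := pow_le_one₀ hr₀ hr₁
    have hnorm : ‖(-1) ^ n / (2 * (n : ℝ) + 1)‖ = 1 / (2 * n + 1) := by
      rw [norm_div, norm_pow, norm_neg, norm_one, one_pow, norm_of_nonneg (by positivity)]
    rw [hnorm, div_mul_div_comm, mul_one, sq]
    push_cast
    gcongr
  have hasSum_arctan_div : ∀ t ∈ Ioo 0 r,
      HasSum (fun n : ℕ ↦ t ^ (2 * n) • ((-1) ^ n / (2 * (n : ℝ) + 1))) (arctan t / t) := by
    intro t ht
    have ht₀ : t ≠ 0 := ht.1.ne'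
    have ht₁ : ‖t‖ < 1 := by
      rw [norm_of_nonneg ht.1.le]
      exact ht.2.trans_le hr₁
    refine ((hasSum_arctan ht₁).div_const t).congr_fun fun n ↦ ?_
    push_cast
    rw [smul_eq_mul, pow_succ]
    field_simp
  refine (hasSum_integral_of_summable_pow_div_smul hr₀ summable_norm hasSum_arctan_div).congr_fun
    fun n ↦ ?_
  push_cast
  rw [smul_eq_mul]
  field_simp

theorem integral_arctan_div : ∫ t in 0..1, arctan t / t = catalanConst := by
  simpa [catalanConst] using (hasSum_integral_arctan_div zero_le_one le_rfl).tsum_eq.symm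

-- Where `sin x = 0` or `cos x = 0`, both sides vanish because `y / 0 = 0`.
theorem cot_sub_tan (x : ℝ) : cot x - tan x = 2 * cot (2 * x) := by
  rw [cot_eq_cos_div_sin, cot_eq_cos_div_sin, tan_eq_sin_div_cos, sin_two_mul, cos_two_mul']
  by_cases hs : sin x = 0
  · simp [hs]
  by_cases hc : cos x = 0
  · simp [hc]
  field_simp

theorem inv_tan_mul_inv_cos_sq (x : ℝ) : (tan x)⁻¹ * (1 / cos x ^ 2) = cot x + tan x := by
  rw [cot_eq_cos_div_sin, tan_eq_sin_div_cos]
  by_cases hs : sin x = 0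
  · simp [hs]
  by_cases hc : cos x = 0
  · simp [hc]
  field_simp
  exact (cos_sq_add_sin_sq x).symm

theorem integral_mul_cot_sub_tan (b : ℝ) :
    ∫ x in 0..b, x * (cot x - tan x) = (∫ x in 0..2 * b, x * cot x) / 2 := by
  have h (x : ℝ) : x * (cot x - tan x) = 2 * x * cot (2 * x) := by rw [cot_sub_tan]; ring
  simp_rw [h]
  rw [intervalIntegral.integral_comp_mul_left (fun x ↦ x * cot x) two_ne_zero, mul_zero,
    smul_eq_mul, inv_mul_eq_div]

theorem integral_mul_cot_add_tan {b : ℝ} (hb₀ : 0 ≤ b) (hb : b < π / 2) :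
    ∫ x in 0..b, x * (cot x + tan x) = ∫ t in 0..tan b, arctan t / t := by
  have cos_ne_zero {x : ℝ} (hx : x ∈ Icc 0 b) : cos x ≠ 0 :=
    (cos_pos_of_mem_Ioo ⟨by linarith [hx.1, pi_pos], hx.2.trans_lt hb⟩).ne'
  have subst := intervalIntegral.integral_comp_mul_deriv_of_deriv_nonneg (a := 0) (b := b)
    (f := tan) (f' := fun x ↦ 1 / cos x ^ 2) (g := fun t ↦ arctan t / t)
    (by
      rw [uIcc_of_le hb₀]
      exact continuousOn_tan.mono fun x hx ↦ cos_ne_zero hx)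
    (by
      rw [min_eq_left hb₀, max_eq_right hb₀]
      exact fun x hx ↦ hasDerivAt_tan (cos_ne_zero (Ioo_subset_Icc_self hx)))
    (fun x _ ↦ by positivity)
  rw [tan_zero] at subst
  rw [← subst]
  refine intervalIntegral.integral_congr_Ioo_of_le hb₀ fun x hx ↦ ?_
  simp only [Function.comp_apply]
  rw [arctan_tan (by linarith [hx.1, pi_pos]) (hx.2.trans hb), div_eq_mul_inv, mul_assoc,
    inv_tan_mul_inv_cos_sq]

theorem sinc_pos {x : ℝ} (hx : |x| < π) : 0 < sinc x := by
  wlog h : 0 ≤ x generalizing x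
  · rw [← sinc_neg]
    exact this (by rwa [abs_neg]) (by linarith)
  rcases h.eq_or_lt with rfl | h₀
  · simp
  · rw [sinc_of_ne_zero h₀.ne']
    exact div_pos (sin_pos_of_pos_of_lt_pi h₀ (lt_of_abs_lt hx)) h₀

-- Since `cot 0 = 0`, the integrand jumps at `0`; `cos x / sinc x` is its continuous modification.
theorem intervalIntegrable_mul_cot {b : ℝ} (hb : |b| < π) :
    IntervalIntegrable (fun x ↦ x * cot x) volume 0 b := by
  have abs_le {x : ℝ} (hx : x ∈ uIcc 0 b) : |x| ≤ |b| := by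
    simpa using abs_sub_left_of_mem_uIcc hx
  have hcont : ContinuousOn (fun x ↦ cos x / sinc x) (uIcc 0 b) :=
    continuousOn_cos.div continuous_sinc.continuousOn fun x hx ↦
      (sinc_pos ((abs_le hx).trans_lt hb)).ne'
  refine hcont.intervalIntegrable.congr_uIoo fun x hx ↦ ?_
  have hx₀ : x ≠ 0 := fun h ↦ left_notMem_uIoo (h ▸ hx)
  simp only [sinc_of_ne_zero hx₀, cot_eq_cos_div_sin]
  field_simp

theorem continuousOn_mul_log_sin : ContinuousOn (fun x ↦ x * log (sin x)) (Ioo (-π) π) := by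
  have hcont : ContinuousOn (fun x ↦ sin x * log (sin x) / sinc x) (Ioo (-π) π) :=
    (continuous_mul_log.comp continuous_sin).continuousOn.div continuous_sinc.continuousOn
      fun x hx ↦ (sinc_pos (abs_lt.2 hx)).ne'
  refine hcont.congr fun x hx ↦ ?_
  rcases eq_or_ne x 0 with rfl | hx₀
  · simp
  have hsinc : sinc x ≠ 0 := (sinc_pos (abs_lt.2 hx)).ne'
  have hsin : sin x = x * sinc x := by rw [sinc_of_ne_zero hx₀, mul_div_cancel₀ _ hx₀]
  calc x * log (sin x) = x * sinc x * log (sin x) / sinc x := by field_simp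
    _ = sin x * log (sin x) / sinc x := by rw [← hsin]

theorem integral_mul_cot {b : ℝ} (hb₀ : 0 ≤ b) (hb : b < π) :
    ∫ x in 0..b, x * cot x = b * log (sin b) - ∫ x in 0..b, log (sin x) := by
  have hlog : IntervalIntegrable (fun x ↦ log (sin x)) volume 0 b := intervalIntegrable_log_sin
  have hcot := intervalIntegrable_mul_cot (by rwa [abs_of_nonneg hb₀])
  have hderiv : ∀ x ∈ Ioo 0 b,
      HasDerivAt (fun x ↦ x * log (sin x)) (log (sin x) + x * cot x) x := fun x hx ↦ by
    have hs : sin x ≠ 0 := (sin_pos_of_pos_of_lt_pi hx.1 (hx.2.trans hb)).ne'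
    simpa [cot_eq_cos_div_sin] using! (hasDerivAt_id x).mul ((hasDerivAt_sin x).log hs)
  have hcont : ContinuousOn (fun x ↦ x * log (sin x)) (Icc 0 b) :=
    continuousOn_mul_log_sin.mono <| Icc_subset_Ioo (neg_lt_zero.2 pi_pos) hb
  have ftc := intervalIntegral.integral_eq_sub_of_hasDerivAt_of_le hb₀ hcont hderiv (hlog.add hcot)
  rw [intervalIntegral.integral_add hlog hcot, zero_mul, sub_zero] at ftc
  linarith

theorem integral_mul_cot_zero_pi_div_two : ∫ x in 0..π / 2, x * cot x = π / 2 * log 2 := by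
  rw [integral_mul_cot (by positivity) (by linarith [pi_pos]), sin_pi_div_two, log_one,
    integral_log_sin_zero_pi_div_two]
  ring

theorem integral_mul_cot_zero_pi_div_four :
    ∫ x in 0..π / 4, x * cot x = (catalanConst + π / 4 * log 2) / 2 := by
  have hpi := pi_pos
  have hcot : IntervalIntegrable (fun x ↦ x * cot x) volume 0 (π / 4) :=
    intervalIntegrable_mul_cot (by rw [abs_of_pos (by positivity)]; linarith)
  have htan : IntervalIntegrable (fun x ↦ x * tan x) volume 0 (π / 4) := by
    refine (continuousOn_id.mul (continuousOn_tan.mono fun x hx ↦ ?_)).intervalIntegrable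
    rw [uIcc_of_le (by positivity)] at hx
    exact (cos_pos_of_mem_Ioo ⟨by linarith [hx.1], by linarith [hx.2]⟩).ne'
  have hadd := integral_mul_cot_add_tan (b := π / 4) (by positivity) (by linarith)
  have hsub := integral_mul_cot_sub_tan (π / 4)
  simp only [mul_add, mul_sub] at hadd hsub
  rw [intervalIntegral.integral_add hcot htan, tan_pi_div_four, integral_arctan_div] at hadd
  rw [intervalIntegral.integral_sub hcot htan, show 2 * (π / 4) = π / 2 by ring,
    integral_mul_cot_zero_pi_div_two] at hsub
  linarith

theorem stmt1 :
    ∑' n : ℕ, riemannZeta (2 * n) / ((2 * n + 1) * 16 ^ n) =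
      ((-(1 / 4) * Real.log 2 - catalanConst / π : ℝ) : ℂ) := by
  have h :=
    (hasSum_riemannZeta_even_mul_pow_div (r := 1 / 4) (by norm_num) (by norm_num)).mul_left 4
  rw [mul_one_div, integral_mul_cot_zero_pi_div_four] at h
  have term_eq (n : ℕ) : riemannZeta (2 * n) / ((2 * n + 1) * 16 ^ n) =
      4 * (riemannZeta (2 * n) * (1 / 4 : ℝ) ^ (2 * n + 1) / (2 * n + 1)) := by
    have hpow : ((1 / 4 : ℝ) : ℂ) ^ (2 * n + 1) = 1 / (4 * 16 ^ n) := by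
      push_cast
      rw [pow_succ, pow_mul, div_pow, one_pow, div_pow, one_pow]
      norm_num
    rw [hpow]
    field_simp
  rw [(h.congr_fun term_eq).tsum_eq]
  norm_cast
  field_simp
  ring
end

section
/- The series ∑_{n=0}^∞ ζ(2n)/((n+2)·4^n) equals -log 2 + 9ζ(3)/π² - 93ζ(5)/(2π⁴). -/
/-!
Integrating `∑ ζ(2n) x ^ (2n) = -(π x / 2) cot (π x)` against `x ^ 3` over `[0, 1/2]` turns the
series into `-16 π ∫ x ^ 4 cot (π x)`. The Dirichlet kernel and the Riemann–Lebesgue lemma allow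
`cot (π x) ~ 2 ∑ sin (2 π k x)` to be integrated term by term, although this Fourier series does not
converge pointwise. Each term is elementary, and they add up to alternating zeta series at `1`, `3`
and `5` together with `ζ(5)`.
-/

open Real

open Filter Finset MeasureTheory Topology

section GeneratingFunction

lemma mem_integerComplement_of_norm_lt_one_s4 {x : ℂ} (hx₀ : x ≠ 0) (hx : ‖x‖ < 1) :
    x ∈ Complex.integerComplement := by
  rintro ⟨m, rfl⟩
  have hm : |m| < 1 := by
    rw [Complex.norm_intCast] at hx
    exact_mod_cast hx
  exact hx₀ (by simp [Int.abs_lt_one_iff.mp hm])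

lemma hasSum_sq_div_add_one_sq_sub_sq {x : ℂ} (hx : x ∈ Complex.integerComplement) :
    HasSum (fun k : ℕ ↦ x ^ 2 / (((k : ℂ) + 1) ^ 2 - x ^ 2))
      (1 / 2 - π * x / 2 * Complex.cot (π * x)) := by
  have hx₀ : x ≠ 0 := Complex.integerComplement.ne_zero hx
  have hcot : HasSum (cotTerm x) (π * Complex.cot (π * x) - 1 / x) :=
    cot_series_rep' hx ▸ (summable_cotTerm hx).hasSum
  convert! hcot.mul_left (-x / 2) using 1
  · funext k
    have hadd : x + (k + 1) ≠ 0 := mod_cast Complex.integerComplement_add_ne_zero hx (k + 1)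
    have hsub : x - (k + 1) ≠ 0 := by
      simpa [sub_eq_add_neg, add_comm] using Complex.integerComplement_add_ne_zero hx (-(k + 1))
    have hsq : ((k : ℂ) + 1) ^ 2 - x ^ 2 ≠ 0 := by
      rw [show ((k : ℂ) + 1) ^ 2 - x ^ 2 = -((x + (k + 1)) * (x - (k + 1))) by ring]
      exact neg_ne_zero.mpr (mul_ne_zero hadd hsub)
    rw [cotTerm_identity hx]
    field_simp
    ring
  · field_simp
    ring

lemma hasSum_div_pow_two_mul_add_one {𝕜 : Type*} [NormedField 𝕜] {x c : 𝕜} (h : ‖x‖ < ‖c‖) :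
    HasSum (fun n : ℕ ↦ (x / c) ^ (2 * (n + 1))) (x ^ 2 / (c ^ 2 - x ^ 2)) := by
  have hc₀ : 0 < ‖c‖ := (norm_nonneg x).trans_lt h
  have hc : c ≠ 0 := norm_pos_iff.mp hc₀
  have hratio : ‖(x / c) ^ 2‖ < 1 := by
    rw [norm_pow, norm_div]
    exact pow_lt_one₀ (by positivity) ((div_lt_one hc₀).mpr h) two_ne_zero
  convert! (hasSum_geometric_of_norm_lt_one hratio).mul_left ((x / c) ^ 2) using 1
  · funext n
    rw [pow_mul, pow_succ']
  · rw [div_pow, one_sub_div (pow_ne_zero 2 hc), inv_div, div_mul_div_cancel₀ (pow_ne_zero 2 hc)]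

lemma hasSum_one_div_add_one_pow_riemannZeta {p : ℕ} (hp : 1 < p) :
    HasSum (fun k : ℕ ↦ 1 / ((k : ℂ) + 1) ^ p) (riemannZeta p) := by
  have hsum : Summable fun k : ℕ ↦ 1 / ((k : ℂ) + 1) ^ p := by
    simpa using (summable_nat_add_iff 1).mpr
      (Complex.summable_one_div_nat_cpow (p := p) |>.mpr (by simpa using hp))
  convert! hsum.hasSum using 1
  simpa using zeta_eq_tsum_one_div_nat_add_one_cpow (s := p) (by simpa using hp)

lemma one_le_norm_natCast_add_one (k : ℕ) : 1 ≤ ‖(k : ℂ) + 1‖ := by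
  rw [← Nat.cast_add_one, Complex.norm_natCast]
  exact_mod_cast Nat.le_add_left 1 k

lemma summable_div_add_one_pow_two_mul {x : ℂ} (hx : ‖x‖ < 1) :
    Summable fun q : ℕ × ℕ ↦ (x / ((q.1 : ℂ) + 1)) ^ (2 * (q.2 + 1)) := by
  have hzeta : Summable fun k : ℕ ↦ ‖1 / ((k : ℂ) + 1) ^ 2‖ :=
    (hasSum_one_div_add_one_pow_riemannZeta one_lt_two).summable.norm
  have hgeom : Summable fun n : ℕ ↦ ‖x‖ ^ n := summable_geometric_of_lt_one (norm_nonneg x) hx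
  refine .of_norm_bounded (hzeta.mul_of_nonneg hgeom (fun _ ↦ norm_nonneg _)
    fun _ ↦ by positivity) fun ⟨k, n⟩ ↦ ?_
  have hk := one_le_norm_natCast_add_one k
  calc ‖(x / ((k : ℂ) + 1)) ^ (2 * (n + 1))‖
      = 1 / ‖(k : ℂ) + 1‖ ^ (2 * (n + 1)) * ‖x‖ ^ (2 * (n + 1)) := by
        rw [norm_pow, norm_div, div_pow]
        ring
    _ ≤ 1 / ‖(k : ℂ) + 1‖ ^ 2 * ‖x‖ ^ n := by
        gcongr ?_ * ?_
        · exact one_div_le_one_div_of_le (by positivity) (pow_le_pow_right₀ hk (by lia))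
        · exact pow_le_pow_of_le_one (norm_nonneg x) hx.le (by lia)
    _ = ‖1 / ((k : ℂ) + 1) ^ 2‖ * ‖x‖ ^ n := by simp

theorem hasSum_riemannZeta_two_mul_mul_pow {x : ℂ} (hx₀ : x ≠ 0) (hx : ‖x‖ < 1) :
    HasSum (fun n : ℕ ↦ riemannZeta (2 * n) * x ^ (2 * n))
      (-(π * x / 2) * Complex.cot (π * x)) := by
  have hsum := (summable_div_add_one_pow_two_mul hx).hasSum
  have hrow (k : ℕ) : HasSum (fun n : ℕ ↦ (x / ((k : ℂ) + 1)) ^ (2 * (n + 1)))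
      (x ^ 2 / (((k : ℂ) + 1) ^ 2 - x ^ 2)) :=
    hasSum_div_pow_two_mul_add_one (hx.trans_le (one_le_norm_natCast_add_one k))
  have hcol (n : ℕ) : HasSum (fun k : ℕ ↦ (x / ((k : ℂ) + 1)) ^ (2 * (n + 1)))
      (riemannZeta (2 * (n + 1 : ℕ)) * x ^ (2 * (n + 1))) := by
    convert! (hasSum_one_div_add_one_pow_riemannZeta (p := 2 * (n + 1)) (by lia)).mul_right
      (x ^ (2 * (n + 1))) using 1
    · funext k
      rw [div_pow, one_div_mul_eq_div]
    · push_cast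
      rfl
  have htotal := (hsum.prod_fiberwise hrow).unique
    (hasSum_sq_div_add_one_sq_sub_sq (mem_integerComplement_of_norm_lt_one_s4 hx₀ hx))
  have hswap : HasSum (fun q : ℕ × ℕ ↦ (x / ((q.2 : ℂ) + 1)) ^ (2 * (q.1 + 1)))
      (1 / 2 - π * x / 2 * Complex.cot (π * x)) :=
    htotal ▸ (Equiv.prodComm ℕ ℕ).hasSum_iff.mpr hsum
  have htail := hswap.prod_fiberwise hcol
  convert! (hasSum_nat_add_iff (f := fun n : ℕ ↦ riemannZeta (2 * n) * x ^ (2 * n)) 1).mp htail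
    using 1
  simp only [sum_range_one, Nat.cast_zero, mul_zero, riemannZeta_zero, pow_zero]
  ring

lemma abs_le_abs_of_mem_uIcc_zero {x r : ℝ} (hx : x ∈ Set.uIcc 0 r) : |x| ≤ |r| := by
  simpa using Set.abs_sub_left_of_mem_uIcc hx

lemma integral_ofReal_pow (n : ℕ) (r : ℝ) :
    ∫ x in (0 : ℝ)..r, (x : ℂ) ^ n = (r : ℂ) ^ (n + 1) / (n + 1) := by
  simp_rw [← Complex.ofReal_pow, intervalIntegral.integral_ofReal, integral_pow]
  simp

theorem hasSum_riemannZeta_two_mul_mul_integral_pow (p : ℕ) {r : ℝ} (hr : |r| < 1) :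
    HasSum (fun n : ℕ ↦ riemannZeta (2 * n) * ((r : ℂ) ^ (2 * n + p + 1) / (2 * n + p + 1)))
      (-(π / 2) * ∫ x in (0 : ℝ)..r, (x : ℂ) ^ (p + 1) * Complex.cot (π * x)) := by
  rcases eq_or_ne r 0 with rfl | hr₀
  · simp [hasSum_zero]
  have hbound : Summable fun n : ℕ ↦ ‖riemannZeta (2 * n) * (r : ℂ) ^ (2 * n)‖ * |r| ^ p :=
    (hasSum_riemannZeta_two_mul_mul_pow (Complex.ofReal_ne_zero.mpr hr₀)
      (by rwa [Complex.norm_real])).summable.norm.mul_right _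
  have hint := intervalIntegral.hasSum_integral_of_dominated_convergence (μ := volume)
    (a := 0) (b := r) (F := fun (n : ℕ) (x : ℝ) ↦ riemannZeta (2 * n) * (x : ℂ) ^ (2 * n + p))
    (f := fun x : ℝ ↦ -(π / 2) * ((x : ℂ) ^ (p + 1) * Complex.cot (π * x)))
    (fun n _ ↦ ‖riemannZeta (2 * n) * (r : ℂ) ^ (2 * n)‖ * |r| ^ p)
    (fun n ↦ Continuous.aestronglyMeasurable (by fun_prop))
    (fun n ↦ ae_of_all _ fun x hx ↦ ?_)
    (ae_of_all _ fun _ _ ↦ hbound) intervalIntegrable_const ?_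
  · rw [intervalIntegral.integral_const_mul] at hint
    convert! hint using 2 with n
    rw [intervalIntegral.integral_const_mul, integral_ofReal_pow]
    push_cast
    rfl
  · have hxr : |x| ≤ |r| := abs_le_abs_of_mem_uIcc_zero (Set.uIoc_subset_uIcc hx)
    rw [pow_add, ← mul_assoc, norm_mul, norm_mul, norm_mul]
    simp only [norm_pow, Complex.norm_real, Real.norm_eq_abs]
    gcongr
  · filter_upwards [Measure.ae_ne volume 0] with x hx₀ hx
    have hx₁ : ‖(x : ℂ)‖ < 1 := by
      rw [Complex.norm_real]
      exact (abs_le_abs_of_mem_uIcc_zero (Set.uIoc_subset_uIcc hx)).trans_lt hr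
    have hgen := hasSum_riemannZeta_two_mul_mul_pow (Complex.ofReal_ne_zero.mpr hx₀) hx₁
    convert! hgen.mul_right ((x : ℂ) ^ p) using 1
    · funext n
      ring
    · ring

theorem hasSum_riemannZeta_two_mul_div_mul_four_pow (p : ℕ) :
    HasSum (fun n : ℕ ↦ riemannZeta (2 * n) / ((2 * n + p + 1) * 4 ^ n))
      (-(2 ^ p * π) * ∫ x in (0 : ℝ)..(1 / 2), (x : ℂ) ^ (p + 1) * Complex.cot (π * x)) := by
  have hhalf : |(1 / 2 : ℝ)| < 1 := by norm_num [abs_of_pos]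
  convert! (hasSum_riemannZeta_two_mul_mul_integral_pow p hhalf).mul_left
    (2 ^ (p + 1)) using 1
  · funext n
    have hpow : (2 : ℂ) ^ (p + 1) * ((1 / 2 : ℝ) : ℂ) ^ (2 * n + p + 1) = 1 / 4 ^ n := by
      push_cast
      rw [add_assoc, pow_add (1 / 2 : ℂ), mul_left_comm, ← mul_pow, pow_mul]
      norm_num [div_pow]
    rw [← div_div]
    linear_combination -(riemannZeta (2 * n) / (2 * n + p + 1)) * hpow
  · ring

end GeneratingFunction

section CotangentFourierSeries

lemma tendsto_integral_mul_cos_atTop {f : ℝ → ℂ} (hf : Integrable f) :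
    Tendsto (fun w : ℝ ↦ ∫ x, f x * Complex.cos (w * x)) atTop (𝓝 0) := by
  have hfreq : Tendsto (fun w : ℝ ↦ w / (2 * π)) atTop (cocompact ℝ) :=
    (tendsto_id.atTop_div_const two_pi_pos).mono_right atTop_le_cocompact
  have hfreq_neg : Tendsto (fun w : ℝ ↦ -(w / (2 * π))) atTop (cocompact ℝ) :=
    (tendsto_neg_atTop_atBot.comp (tendsto_id.atTop_div_const two_pi_pos)).mono_right
      atBot_le_cocompact
  have hlim := (((Real.tendsto_integral_exp_smul_cocompact f).comp hfreq).add
    ((Real.tendsto_integral_exp_smul_cocompact f).comp hfreq_neg)).div_const 2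
  rw [add_zero, zero_div] at hlim
  have hint (ξ : ℝ) : Integrable fun x : ℝ ↦ Real.fourierChar (-(x * ξ)) • f x := by
    simpa [mul_comm] using (Real.fourierIntegral_convergent_iff ξ).mpr hf
  refine hlim.congr fun w ↦ ?_
  simp only [Function.comp_apply]
  rw [← integral_add (hint _) (hint _), ← integral_div]
  congr with x
  have hexp (s : ℝ) : (Real.fourierChar s : ℂ) = Complex.exp ((2 * π * s : ℝ) * Complex.I) :=
    Real.fourierChar_apply s
  have hw : 2 * π * (x * (w / (2 * π))) = w * x := by field_simp
  simp only [Circle.smul_def, hexp, smul_eq_mul, mul_neg, neg_neg, hw, Complex.cos]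
  push_cast
  ring

lemma tendsto_intervalIntegral_mul_cos_atTop {f : ℝ → ℂ} {a b : ℝ}
    (hf : IntervalIntegrable f volume a b) :
    Tendsto (fun w : ℝ ↦ ∫ x in a..b, f x * Complex.cos (w * x)) atTop (𝓝 0) := by
  have hset {s : Set ℝ} (hs : MeasurableSet s) (hfs : IntegrableOn f s) :
      Tendsto (fun w : ℝ ↦ ∫ x in s, f x * Complex.cos (w * x)) atTop (𝓝 0) := by
    refine (tendsto_integral_mul_cos_atTop (hfs.integrable_indicator hs)).congr fun w ↦ ?_
    rw [← integral_indicator hs]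
    simp only [Set.indicator_mul_left]
  simpa only [intervalIntegral, sub_zero] using
    (hset measurableSet_Ioc hf.1).sub (hset measurableSet_Ioc hf.2)

lemma sum_two_mul_sin_mul_sin (θ : ℂ) (N : ℕ) :
    ∑ k ∈ range N, 2 * (Complex.sin θ * Complex.sin (2 * (k + 1) * θ)) =
      Complex.cos θ - Complex.cos ((2 * N + 1) * θ) := by
  have hstep (k : ℕ) : 2 * (Complex.sin θ * Complex.sin (2 * (k + 1) * θ)) =
      Complex.cos ((2 * k + 1) * θ) - Complex.cos ((2 * (k + 1 : ℕ) + 1) * θ) := by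
    rw [Complex.cos_sub_cos]
    have hsub : ((2 * k + 1) * θ - (2 * (k + 1 : ℕ) + 1) * θ) / 2 = -θ := by push_cast; ring
    have hadd : ((2 * k + 1) * θ + (2 * (k + 1 : ℕ) + 1) * θ) / 2 = 2 * (k + 1) * θ := by
      push_cast; ring
    rw [hsub, hadd, Complex.sin_neg]
    ring
  simp_rw [hstep, sum_range_sub' (fun k : ℕ ↦ Complex.cos ((2 * k + 1) * θ))]
  simp

theorem tendsto_sum_integral_mul_sin_mul_sin {g : ℝ → ℂ} {a b : ℝ}
    (hg : IntervalIntegrable g volume a b) :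
    Tendsto (fun N : ℕ ↦ ∑ k ∈ range N, 2 * ∫ x in a..b,
        g x * Complex.sin (π * x) * Complex.sin (2 * π * (k + 1) * x)) atTop
      (𝓝 (∫ x in a..b, g x * Complex.cos (π * x))) := by
  have hfreq : Tendsto (fun N : ℕ ↦ (2 * (N : ℝ) + 1) * π) atTop atTop :=
    (tendsto_atTop_add_const_right _ _
      (tendsto_natCast_atTop_atTop.const_mul_atTop two_pos)).atTop_mul_const pi_pos
  have hlim := ((tendsto_intervalIntegral_mul_cos_atTop hg).comp hfreq).const_sub
    (∫ x in a..b, g x * Complex.cos (π * x))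
  rw [sub_zero] at hlim
  refine hlim.congr fun N ↦ ?_
  have hsin (k : ℕ) : IntervalIntegrable (fun x : ℝ ↦
      2 * (g x * Complex.sin (π * x) * Complex.sin (2 * π * (k + 1) * x))) volume a b :=
    ((hg.mul_continuousOn (by fun_prop)).mul_continuousOn (by fun_prop)).const_mul 2
  simp_rw [Function.comp_apply, ← intervalIntegral.integral_const_mul]
  rw [← intervalIntegral.integral_sub (hg.mul_continuousOn (by fun_prop))
    (hg.mul_continuousOn (by fun_prop)), ← intervalIntegral.integral_finsetSum fun k _ ↦ hsin k]
  congr with x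
  push_cast
  rw [← mul_sub, mul_assoc _ (π : ℂ), ← sum_two_mul_sin_mul_sin, mul_sum]
  refine sum_congr rfl fun k _ ↦ ?_
  rw [show 2 * (π : ℂ) * (k + 1) * x = 2 * (k + 1) * (π * x) by ring]
  ring

lemma sinc_ne_zero_of_abs_lt_pi {x : ℝ} (hx : |x| < π) : sinc x ≠ 0 := by
  rcases eq_or_ne x 0 with rfl | hx₀
  · simp
  · rw [sinc_of_ne_zero hx₀]
    refine div_ne_zero ?_ hx₀
    rwa [Ne, sin_eq_zero_iff_of_lt_of_lt (abs_lt.mp hx).1 (abs_lt.mp hx).2]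

lemma intervalIntegrable_pow_div_sin_pi_mul (p : ℕ) {r : ℝ} (hr : |r| < 1) :
    IntervalIntegrable (fun x : ℝ ↦ (x : ℂ) ^ (p + 1) / Complex.sin (π * x)) volume 0 r := by
  have hcont : ContinuousOn (fun x : ℝ ↦ x ^ p / (π * sinc (π * x))) (Set.uIcc 0 r) := by
    refine ContinuousOn.div (by fun_prop) (by fun_prop) fun x hx ↦ ?_
    have hx₁ : |x| < 1 := (abs_le_abs_of_mem_uIcc_zero hx).trans_lt hr
    refine mul_ne_zero pi_ne_zero (sinc_ne_zero_of_abs_lt_pi ?_)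
    rw [abs_mul, abs_of_pos pi_pos]
    exact mul_lt_of_lt_one_right pi_pos hx₁
  refine (Complex.continuous_ofReal.comp_continuousOn hcont).intervalIntegrable.congr_ae
    (ae_restrict_of_ae ?_)
  filter_upwards [Measure.ae_ne volume 0] with x hx
  simp only [Function.comp_apply, sinc_of_ne_zero (mul_ne_zero pi_ne_zero hx)]
  push_cast
  have : (x : ℂ) ≠ 0 := mod_cast hx
  rcases eq_or_ne (Complex.sin (π * x)) 0 with h | h
  · simp [h]
  · field_simp
    rw [pow_succ]

theorem tendsto_sum_integral_pow_mul_sin (p : ℕ) {r : ℝ} (hr : |r| < 1) :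
    Tendsto (fun N : ℕ ↦ ∑ k ∈ range N, 2 * ∫ x in (0 : ℝ)..r,
        (x : ℂ) ^ (p + 1) * Complex.sin (2 * π * (k + 1) * x)) atTop
      (𝓝 (∫ x in (0 : ℝ)..r, (x : ℂ) ^ (p + 1) * Complex.cot (π * x))) := by
  have hlim := tendsto_sum_integral_mul_sin_mul_sin (intervalIntegrable_pow_div_sin_pi_mul p hr)
  convert! hlim using 1
  · funext N
    refine sum_congr rfl fun k _ ↦ ?_
    congr 1
    refine intervalIntegral.integral_congr_ae ?_
    filter_upwards [Measure.ae_ne volume 0] with x hx₀ hx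
    have hsin : Complex.sin (π * x) ≠ 0 := by
      refine sin_pi_mul_ne_zero (mem_integerComplement_of_norm_lt_one_s4 (mod_cast hx₀) ?_)
      rw [Complex.norm_real]
      exact (abs_le_abs_of_mem_uIcc_zero (Set.uIoc_subset_uIcc hx)).trans_lt hr
    rw [div_mul_cancel₀ _ hsin]
  · simp only [Complex.cot, mul_div_assoc', div_mul_eq_mul_div]

end CotangentFourierSeries

section Moments

lemma integral_pow_add_two_mul_sin (n : ℕ) {a : ℂ} (ha : a ≠ 0) (b : ℝ) :
    ∫ x in (0 : ℝ)..b, (x : ℂ) ^ (n + 2) * Complex.sin (a * x) =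
      -(b : ℂ) ^ (n + 2) * Complex.cos (a * b) / a
        + (n + 2) * (b : ℂ) ^ (n + 1) * Complex.sin (a * b) / a ^ 2
        - (n + 2) * (n + 1) / a ^ 2 * ∫ x in (0 : ℝ)..b, (x : ℂ) ^ n * Complex.sin (a * x) := by
  have hderiv (x : ℝ) : HasDerivAt (fun x : ℝ ↦ -(x : ℂ) ^ (n + 2) * Complex.cos (a * x) / a
        + (n + 2) * (x : ℂ) ^ (n + 1) * Complex.sin (a * x) / a ^ 2)
      ((x : ℂ) ^ (n + 2) * Complex.sin (a * x)
        + (n + 2) * (n + 1) / a ^ 2 * ((x : ℂ) ^ n * Complex.sin (a * x))) x := by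
    have hlin : HasDerivAt (fun z : ℂ ↦ a * z) a x := hasDerivAt_const_mul a
    have hcos := ((hasDerivAt_pow (n + 2) (x : ℂ)).neg.mul hlin.ccos).div_const a
    have hsin := (((hasDerivAt_pow (n + 1) (x : ℂ)).const_mul (n + 2 : ℂ)).mul
      hlin.csin).div_const (a ^ 2)
    refine ((hcos.add hsin).comp_ofReal).congr_deriv ?_
    simp only [Pi.neg_apply]
    push_cast
    field_simp
    ring
  have hint (m : ℕ) : IntervalIntegrable (fun x : ℝ ↦ (x : ℂ) ^ m * Complex.sin (a * x))
      volume 0 b := Continuous.intervalIntegrable (by fun_prop) _ _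
  have hparts := intervalIntegral.integral_eq_sub_of_hasDerivAt (fun x _ ↦ hderiv x)
    ((hint (n + 2)).add ((hint n).const_mul _))
  rw [intervalIntegral.integral_add (hint _) ((hint n).const_mul _),
    intervalIntegral.integral_const_mul] at hparts
  rw [eq_sub_iff_add_eq, hparts]
  simp

lemma integral_sin_mul_complex {z : ℂ} (hz : z ≠ 0) (a b : ℝ) :
    ∫ x in a..b, Complex.sin (z * x) = (Complex.cos (z * a) - Complex.cos (z * b)) / z := by
  have hderiv (x : ℝ) : HasDerivAt (fun x : ℝ ↦ -Complex.cos (z * x) / z)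
      (Complex.sin (z * x)) x := by
    have hlin : HasDerivAt (fun y : ℂ ↦ z * y) z x := hasDerivAt_const_mul z
    refine ((hlin.ccos.neg.div_const z).comp_ofReal).congr_deriv ?_
    field_simp
  rw [intervalIntegral.integral_eq_sub_of_hasDerivAt (fun x _ ↦ hderiv x)
    (Continuous.intervalIntegrable (by fun_prop) _ _)]
  ring

lemma integral_pow_four_mul_sin_two_pi_mul (k : ℕ) :
    ∫ x in (0 : ℝ)..(1 / 2), (x : ℂ) ^ 4 * Complex.sin (2 * π * (k + 1) * x) =
      -(1 / (32 * π)) * ((-1) ^ (k + 1) / (k + 1))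
        + 3 / (8 * π ^ 3) * ((-1) ^ (k + 1) / (k + 1) ^ 3)
        - 3 / (4 * π ^ 5) * ((-1) ^ (k + 1) / (k + 1) ^ 5)
        + 3 / (4 * π ^ 5) * (1 / (k + 1) ^ 5) := by
  have hπ : (π : ℂ) ≠ 0 := mod_cast pi_ne_zero
  have hk : (k : ℂ) + 1 ≠ 0 := Nat.cast_add_one_ne_zero k
  have ha : 2 * (π : ℂ) * (k + 1) ≠ 0 := mul_ne_zero (mul_ne_zero two_ne_zero hπ) hk
  have hangle : 2 * (π : ℂ) * (k + 1) * (1 / 2 : ℝ) = (k + 1 : ℕ) * π := by push_cast; ring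
  have hcos : Complex.cos ((k + 1 : ℕ) * π) = (-1) ^ (k + 1) :=
    mod_cast congrArg Complex.ofReal (Real.cos_nat_mul_pi (k + 1))
  rw [integral_pow_add_two_mul_sin 2 ha, integral_pow_add_two_mul_sin 0 ha]
  simp only [pow_zero, one_mul]
  rw [integral_sin_mul_complex ha, hangle, hcos, Complex.sin_nat_mul_pi, Complex.ofReal_zero,
    mul_zero (2 * (π : ℂ) * _), Complex.cos_zero]
  push_cast
  field_simp
  ring

end Moments

section AlternatingSums

lemma sum_range_two_mul_alternating_one_div_pow {K : Type*} [Field K] (p N : ℕ) :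
    ∑ k ∈ range (2 * N), (-1 : K) ^ (k + 1) / ((k : K) + 1) ^ p =
      2 / 2 ^ p * ∑ k ∈ range N, 1 / ((k : K) + 1) ^ p
        - ∑ k ∈ range (2 * N), 1 / ((k : K) + 1) ^ p := by
  induction N with
  | zero => simp
  | succ n ih =>
    have heven : 1 / ((2 * n + 1 : ℕ) + 1 : K) ^ p = 1 / 2 ^ p * (1 / ((n : K) + 1) ^ p) := by
      rw [one_div_mul_one_div, ← mul_pow]
      push_cast
      ring
    have hsign : (-1 : K) ^ (2 * n + 1) = -1 := Odd.neg_one_pow ⟨n, rfl⟩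
    have hsign' : (-1 : K) ^ (2 * n + 1 + 1) = 1 := by rw [pow_succ, hsign]; ring
    rw [Nat.mul_succ]
    simp only [sum_range_succ]
    rw [ih, hsign, hsign', heven]
    ring

lemma tendsto_two_mul_atTop : Tendsto (fun N : ℕ ↦ 2 * N) atTop atTop :=
  tendsto_id.const_mul_atTop' two_pos

lemma tendsto_sum_alternating_one_div_pow {p : ℕ} (hp : 1 < p) :
    Tendsto (fun N : ℕ ↦ ∑ k ∈ range (2 * N), (-1 : ℂ) ^ (k + 1) / ((k : ℂ) + 1) ^ p) atTop
      (𝓝 (2 / 2 ^ p * riemannZeta p - riemannZeta p)) := by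
  have hzeta := (hasSum_one_div_add_one_pow_riemannZeta hp).tendsto_sum_nat
  simp_rw [sum_range_two_mul_alternating_one_div_pow]
  exact (hzeta.const_mul _).sub (hzeta.comp tendsto_two_mul_atTop)

lemma tendsto_sum_alternating_one_div :
    Tendsto (fun N : ℕ ↦ ∑ k ∈ range (2 * N), (-1 : ℝ) ^ (k + 1) / ((k : ℝ) + 1)) atTop
      (𝓝 (-Real.log 2)) := by
  have hgamma := Real.tendsto_harmonic_sub_log
  have hlim := (hgamma.sub (hgamma.comp tendsto_two_mul_atTop)).sub_const (Real.log 2)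
  rw [sub_self, zero_sub] at hlim
  refine hlim.congr' ?_
  filter_upwards [eventually_ne_atTop 0] with N hN
  have hlog : Real.log (2 * N : ℕ) = Real.log 2 + Real.log N := by
    rw [Nat.cast_mul, Nat.cast_ofNat, Real.log_mul two_ne_zero (Nat.cast_ne_zero.mpr hN)]
  have hsum := sum_range_two_mul_alternating_one_div_pow (K := ℝ) 1 N
  simp only [pow_one] at hsum
  rw [hsum, Function.comp_apply, hlog]
  simp only [harmonic, Nat.cast_add_one, Rat.cast_sum, Rat.cast_inv, Rat.cast_add,
    Rat.cast_natCast, Rat.cast_one, one_div]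
  ring

end AlternatingSums

theorem integral_pow_four_mul_cot :
    ∫ x in (0 : ℝ)..(1 / 2), (x : ℂ) ^ 4 * Complex.cot (π * x) =
      Real.log 2 / (16 * π) - 9 * riemannZeta 3 / (16 * π ^ 3)
        + 93 * riemannZeta 5 / (32 * π ^ 5) := by
  have hfourier := (tendsto_sum_integral_pow_mul_sin 3 (r := 1 / 2)
    (by norm_num [abs_of_pos])).comp tendsto_two_mul_atTop
  have hone : Tendsto (fun N : ℕ ↦ ∑ k ∈ range (2 * N), (-1 : ℂ) ^ (k + 1) / ((k : ℂ) + 1))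
      atTop (𝓝 (-(Real.log 2 : ℂ))) := by
    rw [← Complex.ofReal_neg]
    refine ((Complex.continuous_ofReal.tendsto _).comp tendsto_sum_alternating_one_div).congr ?_
    simp
  have hthree := tendsto_sum_alternating_one_div_pow (p := 3) (by norm_num)
  have hfive := tendsto_sum_alternating_one_div_pow (p := 5) (by norm_num)
  have hzeta := (hasSum_one_div_add_one_pow_riemannZeta (p := 5) (by norm_num)).tendsto_sum_nat.comp
    tendsto_two_mul_atTop
  have hmoments := (((((hone.const_mul (-(1 / (32 * π) : ℂ))).add
    (hthree.const_mul (3 / (8 * π ^ 3) : ℂ))).sub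
    (hfive.const_mul (3 / (4 * π ^ 5) : ℂ))).add
    (hzeta.const_mul (3 / (4 * π ^ 5) : ℂ))).const_mul 2)
  have hπ : (π : ℂ) ≠ 0 := mod_cast pi_ne_zero
  calc _ = _ := tendsto_nhds_unique hfourier (hmoments.congr fun N ↦ ?_)
    _ = _ := ?_
  · simp only [Function.comp_apply, integral_pow_four_mul_sin_two_pi_mul, ← mul_sum,
      sum_add_distrib, sum_sub_distrib]
  · push_cast
    field_simp
    ring

theorem stmt4 :
    ∑' n : ℕ, riemannZeta (2 * n) / ((n + 2) * 4 ^ n) =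
      -(Real.log 2 : ℂ) + 9 * riemannZeta 3 / (π : ℂ) ^ 2 -
        93 * riemannZeta 5 / (2 * (π : ℂ) ^ 4) := by
  have hπ : (π : ℂ) ≠ 0 := mod_cast pi_ne_zero
  have hterm (n : ℕ) : riemannZeta (2 * n) / ((n + 2) * 4 ^ n) =
      2 * (riemannZeta (2 * n) / ((2 * n + (3 : ℕ) + 1) * 4 ^ n)) := by
    rw [show 2 * (n : ℂ) + (3 : ℕ) + 1 = 2 * (n + 2) by push_cast; ring, mul_assoc 2,
      ← mul_div_assoc, mul_div_mul_left _ _ two_ne_zero]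
  simp_rw [hterm, ((hasSum_riemannZeta_two_mul_div_mul_four_pow 3).mul_left 2).tsum_eq,
    integral_pow_four_mul_cot]
  field_simp
  ring
end
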